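/- Let 1 ≤ p ≤ ∞. There exists a constant C > 0 such that for all Schwartz functions a₁, a₂ on ℝ^d and all Schwartz functions f on ℝ^d, the symbol a(x,ω) = a₁(x)·a₂(ω) satisfies ‖a(x,D)f‖_{M^{p,p}} ≤ C · ‖a₁‖_{W(F L¹, L^∞)} · ‖a₂‖_{W(F L¹, L^∞)} · ‖f‖_{M^{p,p}}. (Tensor-product symbols with both factors in W(F L¹, L^∞) give operators bounded on M^p.) -/

import Mathlib

open MeasureTheory SchwartzMap Complex ENNReal NNReal

noncomputable section

/-- Mixed `L^p`-type norm of an `ℝ≥0∞`-valued function, with the usual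
`essSup` modification when `p = ∞`. -/
def lqNorm {α : Type*} [MeasurableSpace α] (μ : Measure α) (p : ℝ≥0∞)
    (f : α → ℝ≥0∞) : ℝ≥0∞ :=
  if p = ∞ then essSup f μ else (∫⁻ a, f a ^ p.toReal ∂μ) ^ (1 / p.toReal)

/-- Conjugate exponent in `ℝ≥0∞` : `1/p + 1/p' = 1`, with `1' = ∞`, `∞' = 1`. -/
def dualExp (p : ℝ≥0∞) : ℝ≥0∞ :=
  if p = 1 then ∞ else if p = ∞ then 1 else ENNReal.ofReal (p.toReal / (p.toReal - 1))

/-- `1/p` as a real number, with the convention `1/∞ = 0`. -/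
def invR (p : ℝ≥0∞) : ℝ := (p⁻¹).toReal

/-- The Gaussian window `G(t) = exp(-π |t|²)` (as a complex-valued function). -/
def gaussWin {ι : Type*} [Fintype ι] (t : EuclideanSpace ℝ ι) : ℂ :=
  Complex.exp (-(Real.pi * ‖t‖ ^ 2))

/-- Short-time Fourier transform with Gaussian window:
`V_G F (x, ω) = ∫ F t * conj (G (t - x)) * exp (-2πi ω⬝t) dt`. -/
def STFT {ι : Type*} [Fintype ι] (F : EuclideanSpace ℝ ι → ℂ)
    (x ω : EuclideanSpace ℝ ι) : ℂ :=
  ∫ t, F t * (starRingEnd ℂ) (gaussWin (t - x)) *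
    Complex.exp (Complex.I * (-(2 * Real.pi * (inner ℝ ω t : ℝ))))

/-- Modulation space norm `M^{p,q}`. -/
def modNorm {ι : Type*} [Fintype ι] (p q : ℝ≥0∞)
    (F : EuclideanSpace ℝ ι → ℂ) : ℝ≥0∞ :=
  lqNorm volume q fun ω => lqNorm volume p fun x => (‖STFT F x ω‖₊ : ℝ≥0∞)

/-- Wiener amalgam norm `W(𝓕 L^p, L^q)` (local component Fourier–Lebesgue). -/
def wFLNorm {ι : Type*} [Fintype ι] (p q : ℝ≥0∞)
    (F : EuclideanSpace ℝ ι → ℂ) : ℝ≥0∞ :=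
  lqNorm volume q fun x => lqNorm volume p fun ω => (‖STFT F x ω‖₊ : ℝ≥0∞)

/-- The unit cube `[0,1)^d`. -/
def unitCube (d : ℕ) : Set (EuclideanSpace ℝ (Fin d)) :=
  {x | ∀ i, x i ∈ Set.Ico (0 : ℝ) 1}

/-- Wiener amalgam norm
`‖f‖_{W(L^r,L^s)} = ( Σ_{n ∈ ℤ^d} ( ∫_{[0,1)^d} |f(x+n)|^r dx )^{s/r} )^{1/s}`. -/
def wNorm (d : ℕ) (r s : ℝ≥0∞) (f : EuclideanSpace ℝ (Fin d) → ℂ) : ℝ≥0∞ :=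
  lqNorm (Measure.count : Measure (Fin d → ℤ)) s fun n =>
    lqNorm (volume.restrict (unitCube d)) r fun x =>
      (‖f (x + show EuclideanSpace ℝ (Fin d) from WithLp.toLp 2 fun i => (n i : ℝ))‖₊ : ℝ≥0∞)

/-- Pairing `(x, ω) ∈ ℝ^d × ℝ^d ↦ ℝ^{2d}`. -/
def pairE {d : ℕ} (x ω : EuclideanSpace ℝ (Fin d)) :
    EuclideanSpace ℝ (Fin d ⊕ Fin d) :=
  WithLp.toLp 2 fun i => Sum.elim (fun j => x j) (fun j => ω j) i

/-- First (space) component of a point of `ℝ^{2d}`. -/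
def xpart {d : ℕ} (z : EuclideanSpace ℝ (Fin d ⊕ Fin d)) :
    EuclideanSpace ℝ (Fin d) := WithLp.toLp 2 fun i => z (Sum.inl i)

/-- Second (frequency) component of a point of `ℝ^{2d}`. -/
def wpart {d : ℕ} (z : EuclideanSpace ℝ (Fin d ⊕ Fin d)) :
    EuclideanSpace ℝ (Fin d) := WithLp.toLp 2 fun i => z (Sum.inr i)

/-- Fourier transform `f̂(ω) = ∫ f t e^{-2πi t⬝ω} dt`. -/
def fTrans {ι : Type*} [Fintype ι] (f : EuclideanSpace ℝ ι → ℂ)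
    (ω : EuclideanSpace ℝ ι) : ℂ :=
  ∫ t, f t * Complex.exp (Complex.I * (-(2 * Real.pi * (inner ℝ t ω : ℝ))))

/-- Kohn–Nirenberg operator `a(x,D) f (x) = ∫ a(x,ω) f̂(ω) e^{2πi x⬝ω} dω`. -/
def KNop {d : ℕ} (a : EuclideanSpace ℝ (Fin d ⊕ Fin d) → ℂ)
    (f : EuclideanSpace ℝ (Fin d) → ℂ) (x : EuclideanSpace ℝ (Fin d)) : ℂ :=
  ∫ ω, a (pairE x ω) * fTrans f ω *
    Complex.exp (Complex.I * (2 * Real.pi * (inner ℝ x ω : ℝ)))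

/-- Weyl operator `L_σ f (x) = ∫∫ e^{2πi (x-y)⬝ω} σ((x+y)/2, ω) f(y) dy dω`. -/
def weylOp {d : ℕ} (σ : EuclideanSpace ℝ (Fin d ⊕ Fin d) → ℂ)
    (f : EuclideanSpace ℝ (Fin d) → ℂ) (x : EuclideanSpace ℝ (Fin d)) : ℂ :=
  ∫ y, ∫ ω, Complex.exp (Complex.I * (2 * Real.pi * (inner ℝ (x - y) ω : ℝ))) *
    σ (pairE ((2 : ℝ)⁻¹ • (x + y)) ω) * f y

/-- Cross-Wigner distribution
`W(g,f)(x,ω) = ∫ g(x+t/2) conj(f(x−t/2)) e^{−2πi ω⬝t} dt`. -/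
def wigner {d : ℕ} (g f : EuclideanSpace ℝ (Fin d) → ℂ)
    (z : EuclideanSpace ℝ (Fin d ⊕ Fin d)) : ℂ :=
  ∫ t, g (xpart z + (2 : ℝ)⁻¹ • t) * (starRingEnd ℂ) (f (xpart z - (2 : ℝ)⁻¹ • t)) *
    Complex.exp (Complex.I * (-(2 * Real.pi * (inner ℝ (wpart z) t : ℝ))))

end

open scoped FourierTransform

lemma gw_eq {ι : Type*} [Fintype ι] (t : EuclideanSpace ℝ ι) :
    gaussWin t = ((Real.exp (-(Real.pi * ‖t‖ ^ 2)) : ℝ) : ℂ) := by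
  simp [gaussWin]

lemma gw_conj {ι : Type*} [Fintype ι] (t : EuclideanSpace ℝ ι) :
    (starRingEnd ℂ) (gaussWin t) = gaussWin t := by
  rw [gw_eq, Complex.conj_ofReal]

lemma gw_norm {ι : Type*} [Fintype ι] (t : EuclideanSpace ℝ ι) :
    ‖gaussWin t‖ = Real.exp (-(Real.pi * ‖t‖ ^ 2)) := by
  rw [gw_eq, Complex.norm_real, Real.norm_of_nonneg (Real.exp_pos _).le]

lemma gw_norm_le {ι : Type*} [Fintype ι] (t : EuclideanSpace ℝ ι) :
    ‖gaussWin t‖ ≤ 1 := by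
  rw [gw_norm, Real.exp_le_one_iff]
  have := Real.pi_pos
  simp; positivity

lemma gw_cont {ι : Type*} [Fintype ι] : Continuous (gaussWin (ι := ι)) := by
  unfold gaussWin; fun_prop

lemma gexp_int {ι : Type*} [Fintype ι] (b : ℝ) (hb : 0 < b) :
    Integrable (fun t : EuclideanSpace ℝ ι => Real.exp (-(b * ‖t‖ ^ 2))) := by
  have h := (GaussianFourier.integrable_cexp_neg_mul_sq_norm_add (V := EuclideanSpace ℝ ι)
    (b := (b : ℂ)) (by simpa using hb) 0 0).norm
  refine h.congr (Filter.Eventually.of_forall fun t => ?_)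
  simp only [Complex.norm_exp]
  congr 1
  simp [← Complex.ofReal_pow, ← Complex.ofReal_mul]

lemma gw_int {ι : Type*} [Fintype ι] : Integrable (gaussWin (ι := ι)) := by
  have := (gexp_int (ι := ι) Real.pi Real.pi_pos).ofReal (𝕜 := ℂ)
  refine this.congr (Filter.Eventually.of_forall fun t => ?_)
  simp only [gw_eq]; rfl

lemma STFT_eq {ι : Type*} [Fintype ι] (F : EuclideanSpace ℝ ι → ℂ) (x ω : EuclideanSpace ℝ ι) :
    STFT F x ω = 𝓕 (fun t => F t * gaussWin (t - x)) ω := by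
  rw [STFT, Real.fourier_eq']
  congr 1; ext t
  rw [gw_conj, smul_eq_mul, mul_comm, real_inner_comm]
  congr 2
  push_cast; ring

lemma STFT_cont {ι : Type*} [Fintype ι] {F : EuclideanSpace ℝ ι → ℂ} (hF : Integrable F) :
    Continuous (fun z : EuclideanSpace ℝ ι × EuclideanSpace ℝ ι => STFT F z.1 z.2) := by
  unfold STFT
  refine continuous_of_dominated (bound := fun t => ‖F t‖) ?_ ?_ hF.norm ?_
  · intro z
    refine (hF.aestronglyMeasurable.mul ?_).mul ?_
    · simp_rw [gw_conj]
      exact (gw_cont.comp (by fun_prop)).aestronglyMeasurable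
    · exact (by fun_prop : Continuous _).aestronglyMeasurable
  · intro z
    refine Filter.Eventually.of_forall fun t => ?_
    have h2 : ‖Complex.exp (Complex.I * (-(2 * Real.pi * (inner ℝ z.2 t : ℝ))))‖ = 1 := by
      rw [Complex.norm_exp]; simp
    rw [norm_mul, norm_mul, h2, mul_one, gw_conj]
    exact mul_le_of_le_one_right (norm_nonneg _) (gw_norm_le _)
  · refine Filter.Eventually.of_forall fun t => ?_
    simp_rw [gw_conj]
    refine (continuous_const.mul (gw_cont.comp (by fun_prop))).mul (by fun_prop)

lemma fourier_gw {ι : Type*} [Fintype ι] (w : EuclideanSpace ℝ ι) :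
    𝓕 (gaussWin (ι := ι)) w = gaussWin w := by
  have h := fourier_gaussian_innerProductSpace (V := EuclideanSpace ℝ ι) (b := (Real.pi : ℂ))
    (by simpa using Real.pi_pos) w
  have hpi : (Real.pi : ℂ) ≠ 0 := by exact_mod_cast Real.pi_ne_zero
  have e : (fun v : EuclideanSpace ℝ ι => cexp (-(Real.pi : ℂ) * ‖v‖ ^ 2)) = gaussWin := by
    ext v; simp [gaussWin]
  rw [e] at h
  rw [h, div_self hpi, Complex.one_cpow, one_mul, gaussWin]
  congr 1
  field_simp

lemma STFT_fourier {ι : Type*} [Fintype ι] {F : EuclideanSpace ℝ ι → ℂ} (hF : Integrable F)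
    (x ω : EuclideanSpace ℝ ι) :
    ‖STFT (𝓕 F) x ω‖ = ‖STFT F (-ω) x‖ := by
  let g : EuclideanSpace ℝ ι → ℂ := fun t => gaussWin (t - x) *
    Complex.exp (Complex.I * (-(2 * Real.pi * (inner ℝ ω t : ℝ))))
  have hgn : ∀ t, ‖g t‖ = ‖gaussWin (t - x)‖ := by
    intro t
    have h2 : ‖Complex.exp (Complex.I * (-(2 * Real.pi * (inner ℝ ω t : ℝ))))‖ = 1 := by
      rw [Complex.norm_exp]; simp
    simp only [g, norm_mul, h2, mul_one]
  have hg : Integrable g := by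
    refine (gw_int.comp_sub_right x).mono ?_ (Filter.Eventually.of_forall fun t => (hgn t).le)
    exact ((gw_cont.comp (by fun_prop)).mul (by fun_prop)).aestronglyMeasurable
  have hflip := VectorFourier.integral_fourierIntegral_smul_eq_flip (μ := volume) (ν := volume)
    (L := innerₗ (EuclideanSpace ℝ ι)) Real.continuous_fourierChar
    continuous_inner hF hg
  rw [flip_innerₗ] at hflip
  change ∫ ξ, 𝓕 F ξ • g ξ = ∫ s, F s • 𝓕 g s at hflip
  have hgf : ∀ s, 𝓕 g s = Complex.exp (Complex.I * (-(2 * Real.pi * (inner ℝ x (s + ω) : ℝ)))) *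
      gaussWin (s + ω) := by
    intro s
    rw [← fourier_gw (s + ω), Real.fourier_eq', Real.fourier_eq', ← integral_const_mul]
    rw [← integral_add_right_eq_self _ x]
    congr 1; ext t
    simp only [g, smul_eq_mul, add_sub_cancel_right]
    rw [mul_left_comm, ← Complex.exp_add, mul_comm (gaussWin t), ← mul_assoc, ← Complex.exp_add]
    congr 2
    simp only [inner_add_left, inner_add_right, real_inner_comm t ω, real_inner_comm x ω]
    push_cast; ring
  have h1 : STFT (𝓕 F) x ω = ∫ ξ, 𝓕 F ξ • g ξ := by
    unfold STFT
    congr 1; ext t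
    simp only [g, gw_conj, smul_eq_mul, mul_assoc]
  have h3 : ∫ s, F s • 𝓕 g s =
      Complex.exp (Complex.I * (-(2 * Real.pi * (inner ℝ x ω : ℝ)))) * STFT F (-ω) x := by
    unfold STFT
    rw [← integral_const_mul]
    congr 1; ext t
    rw [hgf, gw_conj, smul_eq_mul, sub_neg_eq_add, inner_add_right]
    have : Complex.exp (Complex.I * (-(2 * Real.pi * ((inner ℝ x t + inner ℝ x ω : ℝ) : ℂ)))) =
      Complex.exp (Complex.I * (-(2 * Real.pi * (inner ℝ x t : ℝ)))) *
      Complex.exp (Complex.I * (-(2 * Real.pi * (inner ℝ x ω : ℝ)))) := by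
      rw [← Complex.exp_add]; congr 1; push_cast; ring
    rw [this]; ring
  have h2 : ‖Complex.exp (Complex.I * (-(2 * Real.pi * (inner ℝ x ω : ℝ))))‖ = 1 := by
    rw [Complex.norm_exp]; simp
  rw [h1, hflip, h3, norm_mul, h2, one_mul]

lemma STFT_int {ι : Type*} [Fintype ι] (a : SchwartzMap (EuclideanSpace ℝ ι) ℂ)
    (y : EuclideanSpace ℝ ι) : Integrable (fun ω => STFT a y ω) := by
  have hb : Integrable (𝓕⁻ a : SchwartzMap (EuclideanSpace ℝ ι) ℂ) := SchwartzMap.integrable _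
  have hab : (a : EuclideanSpace ℝ ι → ℂ) = 𝓕 ((𝓕⁻ a : SchwartzMap (EuclideanSpace ℝ ι) ℂ) : EuclideanSpace ℝ ι → ℂ) := by
    rw [← SchwartzMap.fourier_coe]; simp
  have hc := STFT_cont (SchwartzMap.integrable (μ := volume) a)
  refine ⟨(hc.comp (by fun_prop : Continuous fun ω => (y, ω))).aestronglyMeasurable, ?_⟩
  generalize (𝓕⁻ a : SchwartzMap (EuclideanSpace ℝ ι) ℂ) = b at *
  have hbound : ∀ ω, ‖STFT a y ω‖ₑ ≤ ∫⁻ t, ‖b t‖ₑ * ‖gaussWin (t + ω)‖ₑ := by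
    intro ω
    have : ‖STFT a y ω‖ₑ = ‖STFT b (-ω) y‖ₑ := by
      rw [← ofReal_norm, ← ofReal_norm, hab, STFT_fourier hb]
    rw [this, STFT]
    refine (enorm_integral_le_lintegral_enorm _).trans (lintegral_mono fun t => ?_)
    have h2 : ‖Complex.exp (Complex.I * (-(2 * Real.pi * (inner ℝ y t : ℝ))))‖ₑ = 1 := by
      rw [← ofReal_norm, Complex.norm_exp]; simp
    rw [enorm_mul, enorm_mul, h2, mul_one, gw_conj, sub_neg_eq_add]
  rw [HasFiniteIntegral]
  refine (lintegral_mono hbound).trans_lt ?_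
  rw [lintegral_lintegral_swap]
  · have : ∀ t : EuclideanSpace ℝ ι, ∫⁻ ω, ‖b t‖ₑ * ‖gaussWin (t + ω)‖ₑ =
        ‖b t‖ₑ * ∫⁻ ω : EuclideanSpace ℝ ι, ‖gaussWin ω‖ₑ := by
      intro t
      rw [lintegral_const_mul' _ _ (by simp)]
      congr 1
      exact lintegral_add_left_eq_self (fun ω => ‖gaussWin ω‖ₑ) t
    simp_rw [this]
    rw [lintegral_mul_const' _ _ gw_int.2.ne]
    exact ENNReal.mul_lt_top hb.2 gw_int.2
  · refine Continuous.aemeasurable ?_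
    have h3 := gw_cont (ι := ι)
    have h4 := b.continuous
    simp only [Function.uncurry_def, ← enorm_mul]
    fun_prop

lemma fourier_mul_conv {ι : Type*} [Fintype ι] {u v : EuclideanSpace ℝ ι → ℂ}
    (hu : Integrable u) (hv : Integrable v) (hvc : Continuous v) (hv' : Integrable (𝓕 v))
    (ω : EuclideanSpace ℝ ι) :
    𝓕 (fun t => v t * u t) ω = ∫ η, 𝓕 v η * 𝓕 u (ω - η) := by
  have key : ∀ (t η : EuclideanSpace ℝ ι), ‖Complex.exp (((-2 * Real.pi * (inner ℝ t (ω - η) : ℝ) : ℝ) : ℂ) * Complex.I)‖ = 1 := by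
    intro t η; rw [Complex.norm_exp_ofReal_mul_I]
  have hint : Integrable (fun z : EuclideanSpace ℝ ι × EuclideanSpace ℝ ι =>
      𝓕 v z.1 * (Complex.exp (((-2 * Real.pi * (inner ℝ z.2 (ω - z.1) : ℝ) : ℝ) : ℂ) * Complex.I) * u z.2))
      (volume.prod volume) := by
    have h1 := hv'.mul_prod hu
    have h2 := h1.bdd_mul (c := 1) (f := fun z : EuclideanSpace ℝ ι × EuclideanSpace ℝ ι =>
      Complex.exp (((-2 * Real.pi * (inner ℝ z.2 (ω - z.1) : ℝ) : ℝ) : ℂ) * Complex.I))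
      (by exact (by fun_prop : Continuous _).aestronglyMeasurable)
      (Filter.Eventually.of_forall fun z => (key z.2 z.1).le)
    refine h2.congr (Filter.Eventually.of_forall fun z => ?_)
    simp only; ring
  have hR : ∫ η, 𝓕 v η * 𝓕 u (ω - η) = ∫ t, ∫ η, 𝓕 v η *
      (Complex.exp (((-2 * Real.pi * (inner ℝ t (ω - η) : ℝ) : ℝ) : ℂ) * Complex.I) * u t) := by
    rw [← integral_integral_swap hint]
    congr 1; ext η
    rw [Real.fourier_eq' u, ← integral_const_mul]
    simp only [smul_eq_mul]
  rw [hR, Real.fourier_eq']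
  congr 1; ext t
  have hinv := congrFun (hvc.fourierInv_fourier_eq hv hv') t
  rw [Real.fourierInv_eq'] at hinv
  conv_lhs => rw [← hinv]
  rw [smul_eq_mul, ← integral_mul_const, ← integral_const_mul]
  congr 1; ext η
  rw [inner_sub_right, smul_eq_mul, real_inner_comm t η]
  have : Complex.exp (((-2 * Real.pi * (inner ℝ t ω - inner ℝ t η) : ℝ) : ℂ) * Complex.I) =
    Complex.exp (((-2 * Real.pi * (inner ℝ t ω) : ℝ) : ℂ) * Complex.I) *
    Complex.exp (((2 * Real.pi * (inner ℝ t η) : ℝ) : ℂ) * Complex.I) := by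
    rw [← Complex.exp_add]; congr 1; push_cast; ring
  rw [this]; ring

lemma mulGW_int {ι : Type*} [Fintype ι] {F : EuclideanSpace ℝ ι → ℂ} (hF : Integrable F)
    (y : EuclideanSpace ℝ ι) : Integrable (fun t => F t * gaussWin (t - y)) := by
  refine hF.mul_bdd (c := 1) (gw_cont.comp (by fun_prop)).aestronglyMeasurable
    (Filter.Eventually.of_forall fun t => gw_norm_le _)

lemma STFT2 {ι : Type*} [Fintype ι] (a F : SchwartzMap (EuclideanSpace ℝ ι) ℂ)
    (y ω : EuclideanSpace ℝ ι) :
    𝓕 (fun t => a t * F t * (gaussWin (t - y) * gaussWin (t - y))) ω =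
      ∫ η, STFT a y η * STFT F y (ω - η) := by
  have h := fourier_mul_conv (mulGW_int F.integrable y) (mulGW_int a.integrable y)
    (a.continuous.mul (gw_cont.comp (by fun_prop))) (by
      refine (STFT_int a y).congr (Filter.Eventually.of_forall fun η => ?_)
      exact STFT_eq _ _ _) ω
  simp_rw [STFT_eq, ← h]
  refine congrArg (fun f : EuclideanSpace ℝ ι → ℂ => 𝓕 f ω) (funext fun t => ?_)
  ring

/-- normalising constant -/
noncomputable def cG (ι : Type*) [Fintype ι] : ℝ :=
  ∫ u : EuclideanSpace ℝ ι, Real.exp (-(4 * Real.pi * ‖u‖ ^ 2))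

lemma cG_pos (ι : Type*) [Fintype ι] : 0 < cG ι := by
  unfold cG
  refine integral_exp_pos (f := fun u : EuclideanSpace ℝ ι => -(4 * Real.pi * ‖u‖ ^ 2)) ?_
  exact gexp_int _ (by have := Real.pi_pos; positivity)

lemma gw_conv {ι : Type*} [Fintype ι] (t : EuclideanSpace ℝ ι) :
    ∫ u, gaussWin u * gaussWin u * (gaussWin (t - u) * gaussWin (t - u)) =
      cG ι * gaussWin t := by
  have h : ∀ u : EuclideanSpace ℝ ι,
      gaussWin u * gaussWin u * (gaussWin (t - u) * gaussWin (t - u)) =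
      ((Real.exp (-(4 * Real.pi * ‖u - (2:ℝ)⁻¹ • t‖ ^ 2)) : ℝ) : ℂ) * gaussWin t := by
    intro u
    simp only [gw_eq, ← Complex.ofReal_mul, ← Real.exp_add]
    congr 2
    rw [norm_sub_sq_real, norm_sub_sq_real, inner_smul_right, norm_smul, real_inner_comm]
    norm_num
    ring
  simp_rw [h]
  rw [integral_mul_const, integral_complex_ofReal, cG,
    integral_sub_right_eq_self (fun u : EuclideanSpace ℝ ι => Real.exp (-(4 * Real.pi * ‖u‖ ^ 2)))]

lemma STFT_window {ι : Type*} [Fintype ι] {h : EuclideanSpace ℝ ι → ℂ} (hh : Integrable h)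
    (x ω : EuclideanSpace ℝ ι) :
    cG ι * STFT h x ω = ∫ u, gaussWin u * gaussWin u *
      𝓕 (fun t => h t * (gaussWin (t - (x + u)) * gaussWin (t - (x + u)))) ω := by
  have hgg : Integrable (fun u : EuclideanSpace ℝ ι => gaussWin u * gaussWin u) := by
    simpa using mulGW_int gw_int 0
  have hint : Integrable (fun z : EuclideanSpace ℝ ι × EuclideanSpace ℝ ι =>
      gaussWin z.1 * gaussWin z.1 * (Complex.exp (((-2 * Real.pi * (inner ℝ z.2 ω : ℝ) : ℝ) : ℂ) * Complex.I) *
        (h z.2 * (gaussWin (z.2 - (x + z.1)) * gaussWin (z.2 - (x + z.1))))))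
      (volume.prod volume) := by
    have h1 := hgg.mul_prod hh
    have hc := gw_cont (ι := ι)
    have h2 := h1.bdd_mul (c := 1) (f := fun z : EuclideanSpace ℝ ι × EuclideanSpace ℝ ι =>
      Complex.exp (((-2 * Real.pi * (inner ℝ z.2 ω : ℝ) : ℝ) : ℂ) * Complex.I) *
        (gaussWin (z.2 - (x + z.1)) * gaussWin (z.2 - (x + z.1))))
      (by exact (by fun_prop : Continuous _).aestronglyMeasurable)
      (Filter.Eventually.of_forall fun z => by
        rw [norm_mul, Complex.norm_exp_ofReal_mul_I, one_mul, norm_mul]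
        exact mul_le_one₀ (gw_norm_le _) (norm_nonneg _) (gw_norm_le _))
    refine h2.congr (Filter.Eventually.of_forall fun z => ?_)
    simp only; ring
  have hR : ∫ u, gaussWin u * gaussWin u *
      𝓕 (fun t => h t * (gaussWin (t - (x + u)) * gaussWin (t - (x + u)))) ω =
      ∫ t, ∫ u, gaussWin u * gaussWin u * (Complex.exp (((-2 * Real.pi * (inner ℝ t ω : ℝ) : ℝ) : ℂ) * Complex.I) *
        (h t * (gaussWin (t - (x + u)) * gaussWin (t - (x + u))))) := by
    rw [← integral_integral_swap hint]
    congr 1; ext u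
    rw [Real.fourier_eq', ← integral_const_mul]
    simp only [smul_eq_mul]
  rw [hR, STFT_eq, Real.fourier_eq', ← integral_const_mul]
  congr 1; ext t
  rw [smul_eq_mul]
  have := gw_conv (t - x)
  calc _ = Complex.exp (((-2 * Real.pi * (inner ℝ t ω : ℝ) : ℝ) : ℂ) * Complex.I) * h t *
      (cG ι * gaussWin (t - x)) := by ring
    _ = _ := by
      rw [← this, ← integral_const_mul]
      congr 1; ext u
      rw [sub_add_eq_sub_sub]; ring

/-- the smoothing kernel -/
noncomputable def kG {ι : Type*} [Fintype ι] (u : EuclideanSpace ℝ ι) : ℝ≥0∞ :=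
  ENNReal.ofReal (cG ι)⁻¹ * ‖gaussWin u * gaussWin u‖ₑ

lemma kG_meas {ι : Type*} [Fintype ι] : Measurable (kG (ι := ι)) := by
  have hc := gw_cont (ι := ι)
  have : Continuous fun u : EuclideanSpace ℝ ι => ‖gaussWin u * gaussWin u‖ₑ := by fun_prop
  exact this.measurable.const_mul _

lemma kG_fin {ι : Type*} [Fintype ι] : ∫⁻ u : EuclideanSpace ℝ ι, kG u ≠ ∞ := by
  have hgg : Integrable (fun u : EuclideanSpace ℝ ι => gaussWin u * gaussWin u) := by
    simpa using mulGW_int gw_int 0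
  unfold kG
  rw [lintegral_const_mul' _ _ (by simp)]
  exact ENNReal.mul_ne_top (by simp) hgg.2.ne

lemma STFT_bound {ι : Type*} [Fintype ι] (a F : SchwartzMap (EuclideanSpace ℝ ι) ℂ)
    (x ω : EuclideanSpace ℝ ι) (hh : Integrable (fun t => a t * F t)) :
    ‖STFT (fun t => a t * F t) x ω‖ₑ ≤
      ∫⁻ u, ∫⁻ η, kG u * ‖STFT a (x + u) η‖ₑ * ‖STFT F (x + u) (ω - η)‖ₑ := by
  have h := STFT_window hh x ω
  have hc := cG_pos ι
  have h2 : STFT (fun t => a t * F t) x ω = ((cG ι)⁻¹ : ℝ) * ∫ u, gaussWin u * gaussWin u *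
      𝓕 (fun t => a t * F t * (gaussWin (t - (x + u)) * gaussWin (t - (x + u)))) ω := by
    rw [← h, ← mul_assoc, ← Complex.ofReal_mul, inv_mul_cancel₀ hc.ne']; simp
  rw [h2, ← integral_const_mul]
  refine (enorm_integral_le_lintegral_enorm _).trans (lintegral_mono fun u => ?_)
  rw [STFT2, enorm_mul, enorm_mul _ (∫ η, _), ← mul_assoc]
  have h3 : ‖(((cG ι)⁻¹ : ℝ) : ℂ)‖ₑ = ENNReal.ofReal (cG ι)⁻¹ := by
    rw [← ofReal_norm, Complex.norm_real, Real.norm_of_nonneg (inv_pos.2 hc).le]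
  rw [h3]
  change kG u * _ ≤ _
  refine (mul_le_mul_right (enorm_integral_le_lintegral_enorm _) _).trans ?_
  rw [← lintegral_const_mul']
  · refine lintegral_mono fun η => ?_
    rw [enorm_mul, mul_assoc]
  · unfold kG
    exact ENNReal.mul_ne_top (by simp) enorm_ne_top

section abstr
variable {ι : Type*} [Fintype ι]

lemma shift_bound (k : EuclideanSpace ℝ ι → ℝ≥0∞)
    (A : EuclideanSpace ℝ ι × EuclideanSpace ℝ ι → ℝ≥0∞) (hA : Measurable A) (hk : Measurable k)
    (x : EuclideanSpace ℝ ι) :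
    ∫⁻ u, ∫⁻ η, k u * A (x + u, η) ≤
      (∫⁻ u, k u) * essSup (fun x => ∫⁻ η, A (x, η)) volume := by
  have h1 : ∀ᵐ y ∂(volume : Measure (EuclideanSpace ℝ ι)), ∫⁻ η, A (y, η) ≤
      essSup (fun x => ∫⁻ η, A (x, η)) volume := ENNReal.ae_le_essSup _
  have h2 : ∀ᵐ u ∂(volume : Measure (EuclideanSpace ℝ ι)), ∫⁻ η, A (x + u, η) ≤
      essSup (fun x => ∫⁻ η, A (x, η)) volume :=
    (measurePreserving_add_left volume x).quasiMeasurePreserving.ae h1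
  rw [← lintegral_mul_const _ hk]
  refine lintegral_mono_ae (h2.mono fun u hu => ?_)
  rw [lintegral_const_mul _ (by fun_prop)]
  gcongr

lemma core_fin (k : EuclideanSpace ℝ ι → ℝ≥0∞)
    (A H : EuclideanSpace ℝ ι × EuclideanSpace ℝ ι → ℝ≥0∞) (S : EuclideanSpace ℝ ι → EuclideanSpace ℝ ι → ℝ≥0∞)
    (hk : Measurable k) (hA : Measurable A) (hH : Measurable H) (r : ℝ) (hr : 1 ≤ r)
    (hS : ∀ x ω, S x ω ≤ ∫⁻ u, ∫⁻ η, k u * A (x + u, η) * H (x + u, ω - η)) :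
    ∫⁻ ω, ∫⁻ x, S x ω ^ r ≤
      ((∫⁻ u, k u) * essSup (fun x => ∫⁻ η, A (x, η)) volume) ^ r * ∫⁻ ω, ∫⁻ x, H (x, ω) ^ r := by
  set κ := ∫⁻ u, k u with hκ
  set M := essSup (fun x => ∫⁻ η, A (x, η)) volume with hM
  have hr0 : 0 < r := by linarith
  have hHr : Measurable fun z => H z ^ r := hH.pow_const r
  have step1 : ∀ x ω, S x ω ^ r ≤ (κ * M) ^ (r - 1) *
      ∫⁻ u, ∫⁻ η, k u * A (x + u, η) * H (x + u, ω - η) ^ r := by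
    intro x ω
    let K : EuclideanSpace ℝ ι × EuclideanSpace ℝ ι → ℝ≥0∞ := fun z => k z.1 * A (x + z.1, z.2)
    let Hs : EuclideanSpace ℝ ι × EuclideanSpace ℝ ι → ℝ≥0∞ := fun z => H (x + z.1, ω - z.2)
    have mK : Measurable K := by fun_prop
    have mH : Measurable Hs := by fun_prop
    have e1 : ∫⁻ u, ∫⁻ η, k u * A (x + u, η) * H (x + u, ω - η) =
        ∫⁻ z, K z * Hs z ∂(volume.prod volume) := by
      rw [lintegral_prod _ (by fun_prop)]
    have e2 : ∫⁻ u, ∫⁻ η, k u * A (x + u, η) * H (x + u, ω - η) ^ r =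
        ∫⁻ z, K z * Hs z ^ r ∂(volume.prod volume) := by
      rw [lintegral_prod _ (by fun_prop)]
    have e3 : ∫⁻ z, K z ∂(volume.prod volume) ≤ κ * M := by
      rw [lintegral_prod _ (by fun_prop)]
      exact shift_bound k A hA hk x
    have hol := ENNReal.lintegral_mul_norm_pow_le (μ := (volume : Measure (EuclideanSpace ℝ ι)).prod volume)
      (f := K) (g := fun z => K z * Hs z ^ r) mK.aemeasurable (by fun_prop)
      (p := 1 - 1 / r) (q := 1 / r) (by
        rw [sub_nonneg, div_le_one hr0]; exact hr) (by positivity) (by ring)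
    have e4 : ∀ z, K z ^ (1 - 1 / r) * (K z * Hs z ^ r) ^ (1 / r) = K z * Hs z := by
      intro z
      generalize K z = A1
      generalize Hs z = B1
      rw [ENNReal.mul_rpow_of_nonneg A1 _ (by positivity), ← mul_assoc,
        ← ENNReal.rpow_add_of_nonneg _ _ (by rw [sub_nonneg, div_le_one hr0]; exact hr) (by positivity),
        ← ENNReal.rpow_mul]
      rw [sub_add_cancel, mul_one_div_cancel hr0.ne', ENNReal.rpow_one, ENNReal.rpow_one]
    simp_rw [e4] at hol
    rw [e2]
    calc S x ω ^ r ≤ ((∫⁻ z, K z ∂(volume.prod volume)) ^ (1 - 1 / r) *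
          (∫⁻ z, K z * Hs z ^ r ∂(volume.prod volume)) ^ (1 / r)) ^ r := by
            gcongr
            exact (hS x ω).trans (e1.le.trans hol)
      _ = (∫⁻ z, K z ∂(volume.prod volume)) ^ (r - 1) *
          (∫⁻ z, K z * Hs z ^ r ∂(volume.prod volume)) := by
            rw [ENNReal.mul_rpow_of_nonneg _ _ hr0.le, ← ENNReal.rpow_mul, ← ENNReal.rpow_mul,
              one_div_mul_cancel hr0.ne', ENNReal.rpow_one]
            congr 2
            field_simp
      _ ≤ _ := by
            gcongr
  have step2 : ∫⁻ ω, ∫⁻ x, ∫⁻ u, ∫⁻ η, k u * A (x + u, η) * H (x + u, ω - η) ^ r ≤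
      κ * M * ∫⁻ ω, ∫⁻ x, H (x, ω) ^ r := by
    rw [lintegral_lintegral_swap (by fun_prop)]
    have e1 : ∀ x, ∫⁻ ω, ∫⁻ u, ∫⁻ η, k u * A (x + u, η) * H (x + u, ω - η) ^ r =
        ∫⁻ u, k u * ((∫⁻ η, A (x + u, η)) * ∫⁻ ω, H (x + u, ω) ^ r) := by
      intro x
      rw [lintegral_lintegral_swap (by fun_prop)]
      refine lintegral_congr fun u => ?_
      rw [lintegral_lintegral_swap (by fun_prop)]
      rw [← mul_assoc, ← lintegral_const_mul (k u) (f := fun η => A (x + u, η)) (by fun_prop),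
        ← lintegral_mul_const _ (f := fun η => k u * A (x + u, η)) (by fun_prop)]
      refine lintegral_congr fun η => ?_
      rw [lintegral_const_mul _ (by fun_prop)]
      congr 1
      exact lintegral_sub_right_eq_self (fun ω => H (x + u, ω) ^ r) η
    simp_rw [e1]
    rw [lintegral_lintegral_swap (by fun_prop)]
    have e2 : ∀ u, ∫⁻ x, k u * ((∫⁻ η, A (x + u, η)) * ∫⁻ ω, H (x + u, ω) ^ r) ≤
        k u * (M * ∫⁻ ω, ∫⁻ x, H (x, ω) ^ r) := by
      intro u
      rw [lintegral_const_mul _ (by fun_prop)]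
      gcongr
      rw [lintegral_add_right_eq_self (fun x => (∫⁻ η, A (x, η)) * ∫⁻ ω, H (x, ω) ^ r) u]
      rw [lintegral_lintegral_swap (f := fun ω x => H (x, ω) ^ r) (by fun_prop)]
      rw [← lintegral_const_mul _ (by fun_prop)]
      refine lintegral_mono_ae ((ENNReal.ae_le_essSup (fun x => ∫⁻ η, A (x, η))).mono fun x hx => ?_)
      gcongr
    refine (lintegral_mono e2).trans ?_
    rw [lintegral_mul_const _ hk, mul_assoc]
  calc ∫⁻ ω, ∫⁻ x, S x ω ^ r ≤ ∫⁻ ω, ∫⁻ x, (κ * M) ^ (r - 1) *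
      ∫⁻ u, ∫⁻ η, k u * A (x + u, η) * H (x + u, ω - η) ^ r :=
        lintegral_mono fun ω => lintegral_mono fun x => step1 x ω
    _ = (κ * M) ^ (r - 1) * ∫⁻ ω, ∫⁻ x, ∫⁻ u, ∫⁻ η, k u * A (x + u, η) * H (x + u, ω - η) ^ r := by
        rw [← lintegral_const_mul _ (by fun_prop)]
        refine lintegral_congr fun ω => ?_
        rw [lintegral_const_mul _ (by fun_prop)]
    _ ≤ (κ * M) ^ (r - 1) * (κ * M * ∫⁻ ω, ∫⁻ x, H (x, ω) ^ r) := by gcongr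
    _ = _ := by
        rw [← mul_assoc]
        congr 1
        nth_rewrite 2 [← ENNReal.rpow_one (κ * M)]
        rw [← ENNReal.rpow_add_of_nonneg _ _ (by linarith) (by linarith), sub_add_cancel]

lemma core_top (k : EuclideanSpace ℝ ι → ℝ≥0∞)
    (A H : EuclideanSpace ℝ ι × EuclideanSpace ℝ ι → ℝ≥0∞)
    (hk : Measurable k) (hA : Measurable A) (N : ℝ≥0∞) (hN : ∀ z, H z ≤ N)
    (x ω : EuclideanSpace ℝ ι) :
    ∫⁻ u, ∫⁻ η, k u * A (x + u, η) * H (x + u, ω - η) ≤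
      (∫⁻ u, k u) * essSup (fun x => ∫⁻ η, A (x, η)) volume * N := by
  calc _ ≤ ∫⁻ u, ∫⁻ η, k u * A (x + u, η) * N :=
        lintegral_mono fun u => lintegral_mono fun η => mul_le_mul_right (hN _) _
    _ = (∫⁻ u, ∫⁻ η, k u * A (x + u, η)) * N := by
        rw [← lintegral_mul_const _ (by fun_prop)]
        refine lintegral_congr fun u => ?_
        rw [lintegral_mul_const _ (by fun_prop)]
    _ ≤ _ := mul_le_mul_left (shift_bound k A hA hk x) _

lemma flip_fin (H : EuclideanSpace ℝ ι × EuclideanSpace ℝ ι → ℝ≥0∞) (m : Measurable H)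
    (s s' : EuclideanSpace ℝ ι → EuclideanSpace ℝ ι) (hs : MeasurePreserving s)
    (hs' : MeasurePreserving s') :
    ∫⁻ ω, ∫⁻ x, H (s ω, s' x) = ∫⁻ ω, ∫⁻ x, H (x, ω) := by
  have e : ∀ ω, ∫⁻ x, H (s ω, s' x) = ∫⁻ x, H (s ω, x) := fun ω =>
    hs'.lintegral_comp (f := fun x => H (s ω, x)) (by fun_prop)
  simp_rw [e]
  rw [hs.lintegral_comp (f := fun y => ∫⁻ x, H (y, x)) (by fun_prop)]
  rw [lintegral_lintegral_swap (by fun_prop)]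

lemma le_essSup_of_cont {H : EuclideanSpace ℝ ι → ℝ≥0∞} (hH : Continuous H) (x : EuclideanSpace ℝ ι) :
    H x ≤ essSup H volume := by
  by_contra hx
  have h0 := ENNReal.ae_le_essSup (μ := volume) H
  rw [ae_iff] at h0
  have hopen : IsOpen {a | ¬ H a ≤ essSup H volume} := by
    simp only [not_le]; exact isOpen_lt continuous_const hH
  have := hopen.measure_eq_zero_iff volume |>.1 h0
  exact (this ▸ (show x ∈ {a | ¬ H a ≤ essSup H volume} from hx) : x ∈ (∅ : Set _))

lemma le_essSup2 {H : EuclideanSpace ℝ ι × EuclideanSpace ℝ ι → ℝ≥0∞} (hH : Continuous H)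
    (x ω : EuclideanSpace ℝ ι) :
    H (x, ω) ≤ essSup (fun ω => essSup (fun x => H (x, ω)) volume) volume := by
  have h0 := ENNReal.ae_le_essSup (μ := volume) (fun ω => essSup (fun x => H (x, ω)) volume)
  have h1 : ∀ᵐ ω', H (x, ω') ≤ essSup (fun ω => essSup (fun x => H (x, ω)) volume) volume :=
    h0.mono fun ω' h => (le_essSup_of_cont (H := fun x => H (x, ω')) (by fun_prop) x).trans h
  exact (le_essSup_of_cont (H := fun ω => H (x, ω)) (by fun_prop) ω).trans (essSup_le_of_ae_le _ h1)

lemma modNorm_fin (p : ℝ≥0∞) (hp : 1 ≤ p) (hp' : p ≠ ∞) (F : EuclideanSpace ℝ ι → ℂ) :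
    modNorm p p F = (∫⁻ ω, ∫⁻ x, ‖STFT F x ω‖ₑ ^ p.toReal) ^ (1 / p.toReal) := by
  have hr : 0 < p.toReal := ENNReal.toReal_pos (by positivity) hp'
  simp only [modNorm, lqNorm, if_neg hp', ← ENNReal.rpow_mul, one_div_mul_cancel hr.ne',
    ENNReal.rpow_one]
  rfl

lemma modNorm_top (F : EuclideanSpace ℝ ι → ℂ) :
    modNorm ∞ ∞ F = essSup (fun ω => essSup (fun x => ‖STFT F x ω‖ₑ) volume) volume := by
  simp only [modNorm, lqNorm, if_true]
  rfl

lemma wFL_eq (F : EuclideanSpace ℝ ι → ℂ) :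
    wFLNorm 1 ∞ F = essSup (fun x => ∫⁻ ω, ‖STFT F x ω‖ₑ) volume := by
  simp [wFLNorm, lqNorm, enorm]

lemma modNorm_mul (p : ℝ≥0∞) (hp : 1 ≤ p) (a F : SchwartzMap (EuclideanSpace ℝ ι) ℂ)
    (hh : Integrable (fun t => a t * F t)) :
    modNorm p p (fun t => a t * F t) ≤
      (∫⁻ u : EuclideanSpace ℝ ι, kG u) * wFLNorm 1 ∞ a * modNorm p p F := by
  have cA := (STFT_cont (a.integrable (μ := volume))).enorm
  have cH := (STFT_cont (F.integrable (μ := volume))).enorm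
  have hb := fun x ω => STFT_bound a F x ω hh
  rw [wFL_eq]
  by_cases hp' : p = ∞
  · subst hp'
    rw [modNorm_top, modNorm_top]
    set N := essSup (fun ω => essSup (fun x => ‖STFT F x ω‖ₑ) volume) volume
    have hN : ∀ x ω, ‖STFT F x ω‖ₑ ≤ N := fun x ω => le_essSup2 cH x ω
    refine essSup_le_of_ae_le _ (Filter.Eventually.of_forall fun ω =>
      essSup_le_of_ae_le _ (Filter.Eventually.of_forall fun x => ?_))
    refine (hb x ω).trans ?_
    exact core_top kG (fun z => ‖STFT a z.1 z.2‖ₑ) (fun z => ‖STFT F z.1 z.2‖ₑ) kG_meas cA.measurable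
      N (fun z => hN z.1 z.2) x ω
  · have hr : 1 ≤ p.toReal := by
      simpa using ENNReal.toReal_mono hp' hp
    have hr0 : 0 < p.toReal := by linarith
    rw [modNorm_fin p hp hp', modNorm_fin p hp hp']
    have := core_fin kG (fun z => ‖STFT a z.1 z.2‖ₑ) (fun z => ‖STFT F z.1 z.2‖ₑ)
      (fun x ω => ‖STFT (fun t => a t * F t) x ω‖ₑ) kG_meas cA.measurable cH.measurable _ hr hb
    refine (ENNReal.rpow_le_rpow this (by positivity)).trans ?_
    rw [ENNReal.mul_rpow_of_nonneg _ _ (by positivity), ← ENNReal.rpow_mul,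
      mul_one_div_cancel hr0.ne', ENNReal.rpow_one]

lemma modNorm_flip (p : ℝ≥0∞) (hp : 1 ≤ p) (F F' : EuclideanSpace ℝ ι → ℂ) (hF : Integrable F)
    (s s' : EuclideanSpace ℝ ι → EuclideanSpace ℝ ι) (hs : MeasurePreserving s)
    (hs' : MeasurePreserving s') (h : ∀ x ω, ‖STFT F' x ω‖ = ‖STFT F (s ω) (s' x)‖) :
    modNorm p p F' ≤ modNorm p p F := by
  have cH := (STFT_cont hF).enorm
  have h' : ∀ x ω, ‖STFT F' x ω‖ₑ = ‖STFT F (s ω) (s' x)‖ₑ := fun x ω => by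
    rw [← ofReal_norm, h, ofReal_norm]
  by_cases hp' : p = ∞
  · subst hp'
    rw [modNorm_top, modNorm_top]
    refine essSup_le_of_ae_le _ (Filter.Eventually.of_forall fun ω =>
      essSup_le_of_ae_le _ (Filter.Eventually.of_forall fun x => ?_))
    simp only [h']
    exact le_essSup2 cH _ _
  · rw [modNorm_fin p hp hp', modNorm_fin p hp hp']
    gcongr ?_ ^ _
    simp_rw [h']
    have m := cH.measurable.pow_const p.toReal
    generalize p.toReal = r at *
    exact (flip_fin (fun z => ‖STFT F z.1 z.2‖ₑ ^ r) m s s' hs hs').le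

end abstr

/-- tensor-product symbols with both factors in `W(𝓕L¹,L^∞)` give
operators bounded on `M^p`. -/
theorem kn_tensor_bounded_on_Mp (d : ℕ) (p : ℝ≥0∞) (hp : 1 ≤ p) :
    ∃ C : ℝ, 0 < C ∧
      ∀ (a₁ a₂ : SchwartzMap (EuclideanSpace ℝ (Fin d)) ℂ)
        (f : SchwartzMap (EuclideanSpace ℝ (Fin d)) ℂ),
        modNorm p p (KNop (fun z => a₁ (xpart z) * a₂ (wpart z)) ⇑f) ≤
          ENNReal.ofReal C * wFLNorm 1 ∞ ⇑a₁ * wFLNorm 1 ∞ ⇑a₂ *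
            modNorm p p ⇑f := by
  set κ : ℝ≥0∞ := ∫⁻ u : EuclideanSpace ℝ (Fin d), kG u with hκ
  have hκf : κ ≠ ∞ := kG_fin
  refine ⟨(κ * κ).toReal + 1, by positivity, fun a₁ a₂ f => ?_⟩
  have hC : κ * κ ≤ ENNReal.ofReal ((κ * κ).toReal + 1) := by
    rw [← ENNReal.ofReal_toReal (ENNReal.mul_ne_top hκf hκf)]
    exact ENNReal.ofReal_le_ofReal (by simp)
  have hmul : ∀ a b : SchwartzMap (EuclideanSpace ℝ (Fin d)) ℂ,
      ∃ c : SchwartzMap (EuclideanSpace ℝ (Fin d)) ℂ, (c : EuclideanSpace ℝ (Fin d) → ℂ) = fun t => a t * b t := by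
    intro a b
    refine ⟨SchwartzMap.smulLeftCLM ℂ a b, ?_⟩
    rw [SchwartzMap.smulLeftCLM_apply a.hasTemperateGrowth]
    rfl
  let f' : SchwartzMap (EuclideanSpace ℝ (Fin d)) ℂ := 𝓕 f
  have hf' : (f' : EuclideanSpace ℝ (Fin d) → ℂ) = 𝓕 (f : EuclideanSpace ℝ (Fin d) → ℂ) :=
    SchwartzMap.fourier_coe f
  obtain ⟨g, hg⟩ := hmul a₂ f'
  let T : SchwartzMap (EuclideanSpace ℝ (Fin d)) ℂ := 𝓕⁻ g
  have hT : (T : EuclideanSpace ℝ (Fin d) → ℂ) = 𝓕⁻ (g : EuclideanSpace ℝ (Fin d) → ℂ) :=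
    SchwartzMap.fourierInv_coe g
  have hgT : (g : EuclideanSpace ℝ (Fin d) → ℂ) = 𝓕 (T : EuclideanSpace ℝ (Fin d) → ℂ) := by
    rw [← SchwartzMap.fourier_coe]; simp [T]
  have hK : KNop (fun z => a₁ (xpart z) * a₂ (wpart z)) ⇑f = fun x => a₁ x * T x := by
    ext x
    rw [hT, Real.fourierInv_eq', KNop, ← integral_const_mul]
    congr 1; ext ω
    have h1 : xpart (pairE x ω) = x := by ext i; simp [xpart, pairE]
    have h2 : wpart (pairE x ω) = ω := by ext i; simp [wpart, pairE]
    have h3 : fTrans f ω = f' ω := by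
      rw [hf', fTrans, Real.fourier_eq']
      congr 1; ext t
      rw [smul_eq_mul, mul_comm]
      congr 2
      push_cast; ring
    rw [h1, h2, h3, hg, smul_eq_mul, real_inner_comm]
    have h4 : Complex.I * (2 * Real.pi * (inner ℝ ω x : ℝ)) =
        ((2 * Real.pi * (inner ℝ ω x : ℝ) : ℝ) : ℂ) * Complex.I := by push_cast; ring
    rw [h4]; ring
  obtain ⟨c, hc⟩ := hmul a₁ T
  have i1 : Integrable (fun t => a₁ t * T t) := hc ▸ c.integrable
  have i2 : Integrable (fun t => a₂ t * f' t) := hg ▸ g.integrable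
  have b1 := modNorm_mul p hp a₁ T i1
  have b2 := modNorm_mul p hp a₂ f' i2
  have hneg : MeasurePreserving (fun x : EuclideanSpace ℝ (Fin d) => -x) :=
    Measure.measurePreserving_neg volume
  have b3 : modNorm p p T ≤ modNorm p p g :=
    modNorm_flip p hp g T g.integrable id (fun x => -x) (MeasurePreserving.id _) hneg (by
      intro x ω
      rw [hgT, STFT_fourier T.integrable]; simp)
  have b4 : modNorm p p f' ≤ modNorm p p f :=
    modNorm_flip p hp f f' f.integrable (fun x => -x) id hneg (MeasurePreserving.id _) (by
      intro x ω
      rw [hf', STFT_fourier f.integrable]; simp)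
  rw [← hg] at b2
  rw [hK]
  calc _ ≤ κ * wFLNorm 1 ∞ a₁ * modNorm p p T := b1
    _ ≤ κ * wFLNorm 1 ∞ a₁ * (κ * wFLNorm 1 ∞ a₂ * modNorm p p f) := by
        gcongr
        exact b3.trans (b2.trans (by gcongr))
    _ = κ * κ * wFLNorm 1 ∞ a₁ * wFLNorm 1 ∞ a₂ * modNorm p p f := by ring
    _ ≤ _ := by gcongr
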